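/- Let (A, 𝔪, k) be a Cohen-Macaulay commutative Noetherian local ring. Then a finitely generated A-module has reducible complexity if and only if it has free reducible complexity; that is, the categories C^rc_A and C^frc_A coincide. -/

import Mathlib

open CategoryTheory Opposite Filter IsLocalRing

universe u

namespace ComplexityTest

variable (A : Type u) [CommRing A] [IsLocalRing A]

structure MinFreeRes (M : Type u) [AddCommGroup M] [Module A M] : Type u where
  b : ℕ → ℕ
  d : (n : ℕ) → ((Fin (b (n + 1)) → A) →ₗ[A] (Fin (b n) → A))
  aug : (Fin (b 0) → A) →ₗ[A] M
  aug_surjective : Function.Surjective aug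
  exact_zero : Function.Exact (d 0) aug
  exact_succ : ∀ n, Function.Exact (d (n + 1)) (d n)
  minimal : ∀ n x i, d n x i ∈ maximalIdeal A

variable (M : Type u) [AddCommGroup M] [Module A M]

def HasComplexityLE (t : ℕ) : Prop :=
  ∃ (R : MinFreeRes A M) (a : ℝ), ∀ᶠ n : ℕ in atTop, (R.b n : ℝ) ≤ a * (n : ℝ) ^ ((t : ℤ) - 1)

noncomputable def complexity : ℕ∞ :=
  sInf {c : ℕ∞ | ∃ t : ℕ, c = t ∧ HasComplexityLE A M t}

def HasProjDimLE (t : ℕ) : Prop :=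
  ∃ R : MinFreeRes A M, ∀ i, t < i → R.b i = 0

noncomputable def projDim : ℕ∞ :=
  sInf {c : ℕ∞ | ∃ t : ℕ, c = t ∧ HasProjDimLE A M t}

def HasFiniteProjDim : Prop :=
  ∃ t : ℕ, HasProjDimLE A M t

def IsSyzygyOf (S : Type u) [AddCommGroup S] [Module A S] : ℕ → Prop
  | 0 => Nonempty (S ≃ₗ[A] M)
  | 1 => ∃ R : MinFreeRes A M, Nonempty (S ≃ₗ[A] (LinearMap.ker R.aug))
  | (n + 2) => ∃ R : MinFreeRes A M, Nonempty (S ≃ₗ[A] (LinearMap.ker (R.d n)))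

variable {A M} in
def IsSES {K S : Type u} [AddCommGroup K] [Module A K] [AddCommGroup S] [Module A S]
    (f : M →ₗ[A] K) (g : K →ₗ[A] S) : Prop :=
  Function.Injective f ∧ Function.Exact f g ∧ Function.Surjective g

noncomputable def extModule (n : ℕ) (N : Type u) [AddCommGroup N] [Module A N] :
    ModuleCat A :=
  ((_root_.Ext A (ModuleCat.{u} A) n).obj (op (ModuleCat.of A M))).obj (ModuleCat.of A N)

def extVanish (n : ℕ) (N : Type u) [AddCommGroup N] [Module A N] : Prop :=
  Subsingleton (extModule A M n N)

/-- The `n`-th Tor module `Tor^A_n(M, N)`. -/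
noncomputable def torModule (n : ℕ) (N : Type u) [AddCommGroup N] [Module A N] :
    ModuleCat A :=
  ((Tor (ModuleCat.{u} A) n).obj (ModuleCat.of A M)).obj (ModuleCat.of A N)

/-- The vanishing `Tor^A_n(M, N) = 0`. -/
def torVanish (n : ℕ) (N : Type u) [AddCommGroup N] [Module A N] : Prop :=
  Subsingleton (torModule A M n N)

noncomputable def depth : ℕ∞ :=
  sInf {c : ℕ∞ | ∃ i : ℕ, c = i ∧ ¬ extVanish A (ResidueField A) i M}

variable {A}

/-- The category of modules of *free reducible complexity* over the local ring `A`.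
It is defined inductively: every finitely generated module of finite projective
dimension has free reducible complexity, and a finitely generated module `M` of finite
positive complexity has free reducible complexity provided there is a short exact
sequence `0 → M → K → Ω^n_A(M) → 0` (necessarily induced by a cohomology element
`η ∈ Ext^{n+1}_A(M,M)`) where `K` is a finitely generated module of free reducible
complexity with `cx K = cx M - 1`. -/
inductive HasFreeRedCxCat : ModuleCat.{u} A → Prop
  | of_finite_projDim (M : ModuleCat.{u} A) (hfg : Module.Finite A M)
      (h : HasFiniteProjDim A M) : HasFreeRedCxCat M
  | step (M K S : ModuleCat.{u} A) (n : ℕ)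
      (hfg : Module.Finite A M) (hKfg : Module.Finite A K)
      (hpos : 0 < complexity A M) (hfin : complexity A M ≠ ⊤)
      (hsyz : IsSyzygyOf A M S n)
      (f : M →ₗ[A] K) (g : K →ₗ[A] S) (hses : IsSES f g)
      (hcx : complexity A K = complexity A M - 1)
      (hK : HasFreeRedCxCat K) : HasFreeRedCxCat M

/-- The category of modules of *reducible complexity* over the local ring `A`: as for
free reducible complexity, but where in addition the reductions are required to
preserve depth. -/
inductive HasRedCxCat : ModuleCat.{u} A → Prop
  | of_finite_projDim (M : ModuleCat.{u} A) (hfg : Module.Finite A M)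
      (h : HasFiniteProjDim A M) : HasRedCxCat M
  | step (M K S : ModuleCat.{u} A) (n : ℕ)
      (hfg : Module.Finite A M) (hKfg : Module.Finite A K)
      (hpos : 0 < complexity A M) (hfin : complexity A M ≠ ⊤)
      (hsyz : IsSyzygyOf A M S n)
      (f : M →ₗ[A] K) (g : K →ₗ[A] S) (hses : IsSES f g)
      (hcx : complexity A K = complexity A M - 1)
      (hdepth : depth A K = depth A M)
      (hK : HasRedCxCat K) : HasRedCxCat M

variable (A)

/-- `M` has free reducible complexity. -/
def HasFreeRedCx (M : Type u) [AddCommGroup M] [Module A M] : Prop :=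
  HasFreeRedCxCat (ModuleCat.of A M)

/-- `M` has reducible complexity. -/
def HasRedCx (M : Type u) [AddCommGroup M] [Module A M] : Prop :=
  HasRedCxCat (ModuleCat.of A M)

/-- A Noetherian local ring is Gorenstein if it has finite injective dimension over
itself; by Bass' characterization, this is equivalent to the vanishing of
`Ext^i_A(k, A)` for all sufficiently large `i`. -/
def IsGorenstein : Prop :=
  ∃ n : ℕ, ∀ i : ℕ, n < i → extVanish A (ResidueField A) i A

end ComplexityTest

open ComplexityTest

/-!
Over a Cohen–Macaulay local ring, the depth condition in the definition of reducible complexity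
holds automatically. By Rees' theorem a nonzero finitely generated module `M` satisfies
`depth M ≤ dim M ≤ dim A = depth A`, so the depth lemma, applied along a minimal free resolution,
gives `depth M ≤ depth (Ωⁿ M)` for every syzygy. A second use of the depth lemma, on
`0 → M → K → Ωⁿ M → 0`, then yields `depth K = depth M`. The zero module, of infinite depth, has
finite projective dimension.
-/

namespace ComplexityTest

section ExtComparison

universe v w w'

variable {C : Type w'} [Category.{v} C] [Abelian C] {X : C} (P : ProjectiveResolution X) (Y : C)

/-- Exactness in degree `n` of the complex `Hom(P, Y)`, for `P` a projective resolution. When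
`n = 0` the truncated subtraction makes `P.complex.d n (n - 1)` zero, so that the condition says
that all `0`-cocycles vanish. -/
def HomExactAt (n : ℕ) : Prop :=
  ∀ f : P.complex.X n ⟶ Y, P.complex.d (n + 1) n ≫ f = 0 →
    ∃ g : P.complex.X (n - 1) ⟶ Y, P.complex.d n (n - 1) ≫ g = f

variable {Y}

lemma subsingleton_derivedFunctorExt_iff_homExactAt (R : Type u) [CommRing R]
    [EnoughProjectives C] [Linear R C] (n : ℕ) :
    Subsingleton (((_root_.Ext R C n).obj (op X)).obj Y) ↔ HomExactAt P Y n := by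
  rw [← ModuleCat.isZero_iff_subsingleton, (P.isoExt (R := R) n Y).isZero_iff,
    ← HomologicalComplex.exactAt_iff_isZero_homology,
    HomologicalComplex.exactAt_iff' _ (n - 1) n (n + 1) (by cases n <;> simp) (by simp),
    ShortComplex.moduleCat_exact_iff]
  exact Iff.rfl

variable [HasExt.{w} C]

lemma extMk_zero_eq_zero_iff (f : P.complex.X 0 ⟶ Y) (hf : P.complex.d 1 0 ≫ f = 0) :
    P.extMk f 1 rfl hf = 0 ↔ f = 0 := by
  have hd : P.cochainComplex.d 0 1 = 0 :=
    (P.cochainComplex.isZero_of_isStrictlyLE 0 1).eq_of_tgt _ _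
  rw [← P.extEquivCohomologyClass.apply_eq_iff_eq, P.extEquivCohomologyClass_extMk,
    P.extEquivCohomologyClass_zero, CochainComplex.HomComplex.CohomologyClass.mk_eq_zero_iff,
    CochainComplex.HomComplex.Cocycle.toSingleMk_mem_coboundaries_iff _ _ _ _ _ 1 (by simp),
    ← Preadditive.IsIso.comp_left_eq_zero (P.cochainComplexXIso 0 0 rfl).hom]
  simp [hd, eq_comm]

lemma extMk_eq_zero_iff_exists_d_comp_eq {n : ℕ} (f : P.complex.X n ⟶ Y)
    (hf : P.complex.d (n + 1) n ≫ f = 0) :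
    P.extMk f (n + 1) rfl hf = 0 ↔
      ∃ g : P.complex.X (n - 1) ⟶ Y, P.complex.d n (n - 1) ≫ g = f := by
  cases n with
  | zero =>
    rw [extMk_zero_eq_zero_iff P f hf]
    simp [eq_comm]
  | succ n => exact P.extMk_eq_zero_iff f (n + 2) rfl hf n rfl

lemma subsingleton_abelianExt_iff_homExactAt (n : ℕ) :
    Subsingleton (Abelian.Ext X Y n) ↔ HomExactAt P Y n := by
  refine ⟨fun _ f hf =>
      (extMk_eq_zero_iff_exists_d_comp_eq P f hf).1 (Subsingleton.elim _ _),
    fun h => subsingleton_of_forall_eq 0 fun x => ?_⟩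
  obtain ⟨f, hf, rfl⟩ := P.extMk_surjective x (n + 1) rfl
  exact (extMk_eq_zero_iff_exists_d_comp_eq P f hf).2 (h f hf)

end ExtComparison

variable {A : Type u} [CommRing A] {L M K S : Type u} [AddCommGroup L] [Module A L]
  [AddCommGroup M] [Module A M] [AddCommGroup K] [Module A K] [AddCommGroup S] [Module A S]
  {f : M →ₗ[A] K} {g : K →ₗ[A] S}

section ExtVanishing

lemma extVanish_iff_subsingleton_abelianExt {n : ℕ} :
    extVanish A L n M ↔ Subsingleton (Abelian.Ext (ModuleCat.of A L) (ModuleCat.of A M) n) :=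
  let P := projectiveResolution (ModuleCat.of A L)
  (subsingleton_derivedFunctorExt_iff_homExactAt P A n).trans
    (subsingleton_abelianExt_iff_homExactAt P n).symm

lemma extVanish_congr (e : M ≃ₗ[A] K) {n : ℕ} : extVanish A L n M ↔ extVanish A L n K :=
  let extFunctor := (_root_.Ext A (ModuleCat.{u} A) n).obj (op (ModuleCat.of A L))
  (extFunctor.mapIso e.toModuleIso).toLinearEquiv.toEquiv.subsingleton_congr

lemma extVanish_pi {ι : Type} [Finite ι] {n : ℕ} (h : extVanish A L n M) :
    extVanish A L n (ι → M) := by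
  cases nonempty_fintype ι
  let Y : ι → ModuleCat A := fun _ => ModuleCat.of A M
  rw [← extVanish_congr (ModuleCat.biproductIsoPi Y).toLinearEquiv]
  rw [extVanish_iff_subsingleton_abelianExt] at h ⊢
  exact (Abelian.Ext.addEquivBiproduct _ (Limits.biproduct.isBilimit Y) n).injective.subsingleton

/-- A short exact sequence of modules as a short complex in `ModuleCat A`. -/
abbrev IsSES.shortComplex (h : IsSES f g) : ShortComplex (ModuleCat.{u} A) :=
  ModuleCat.shortComplexOfCompEqZero f g h.2.1.linearMap_comp_eq_zero

lemma IsSES.shortExact (h : IsSES f g) : h.shortComplex.ShortExact :=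
  ModuleCat.shortComplex_shortExact _ h.2.1 h.1 h.2.2

lemma IsSES.extVanish_middle (h : IsSES f g) {n : ℕ} (hM : extVanish A L n M)
    (hS : extVanish A L n S) : extVanish A L n K := by
  rw [extVanish_iff_subsingleton_abelianExt] at hM hS ⊢
  refine subsingleton_of_forall_eq 0 fun x => ?_
  obtain ⟨y, rfl⟩ := Abelian.Ext.covariant_sequence_exact₂ _ h.shortExact x
    (Subsingleton.elim (h := hS) _ _)
  rw [Subsingleton.elim (h := hM) y 0, Abelian.Ext.zero_comp]

lemma IsSES.extVanish_left (h : IsSES f g) {n : ℕ} (hK : extVanish A L n K)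
    (hS : ∀ m, m + 1 = n → extVanish A L m S) : extVanish A L n M := by
  simp only [extVanish_iff_subsingleton_abelianExt] at hK hS ⊢
  cases n with
  | zero =>
    have := h.shortExact.mono_f
    exact (Abelian.Ext.postcomp_mk₀_injective_of_mono _ h.shortComplex.f).subsingleton
  | succ m =>
    have := hS m rfl
    refine subsingleton_of_forall_eq 0 fun x => ?_
    obtain ⟨y, rfl⟩ := Abelian.Ext.covariant_sequence_exact₁ _ h.shortExact x
      (Subsingleton.elim (h := hK) _ _) rfl
    rw [Subsingleton.elim y 0, Abelian.Ext.zero_comp]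

end ExtVanishing

variable [IsLocalRing A]

section Depth

lemma le_depth_iff {c : ℕ∞} :
    c ≤ depth A M ↔ ∀ i : ℕ, (i : ℕ∞) < c → extVanish A (ResidueField A) i M := by
  simp only [depth, le_sInf_iff, Set.mem_ofPred_eq, forall_exists_index, and_imp]
  exact ⟨fun h i hi => by_contra fun hne => hi.not_ge (h _ i rfl hne),
    fun h _ i hc hne => hc ▸ not_lt.1 fun hi => hne (h i hi)⟩

lemma extVanish_of_lt_depth {i : ℕ} (hi : (i : ℕ∞) < depth A M) :
    extVanish A (ResidueField A) i M :=
  le_depth_iff.1 le_rfl i hi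

lemma depth_congr (e : M ≃ₗ[A] K) : depth A M = depth A K := by
  simp only [depth, extVanish_congr e]

lemma depth_le_depth_pi {ι : Type} [Finite ι] : depth A M ≤ depth A (ι → M) :=
  le_depth_iff.2 fun _ hi => extVanish_pi (extVanish_of_lt_depth hi)

lemma IsSES.min_depth_le_depth_middle (h : IsSES f g) :
    min (depth A M) (depth A S) ≤ depth A K :=
  le_depth_iff.2 fun _ hi =>
    h.extVanish_middle (extVanish_of_lt_depth (lt_min_iff.1 hi).1)
      (extVanish_of_lt_depth (lt_min_iff.1 hi).2)

lemma IsSES.min_depth_le_depth_left (h : IsSES f g) :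
    min (depth A K) (depth A S + 1) ≤ depth A M := by
  refine le_depth_iff.2 fun i hi => ?_
  obtain ⟨hiK, hiS⟩ := lt_min_iff.1 hi
  refine h.extVanish_left (extVanish_of_lt_depth hiK) fun m hm => extVanish_of_lt_depth ?_
  rw [← hm, Nat.cast_add_one] at hiS
  exact lt_of_add_lt_add_right hiS

lemma IsSES.depth_middle_eq (h : IsSES f g) (hMS : depth A M ≤ depth A S) :
    depth A K = depth A M := by
  refine le_antisymm (le_of_not_gt fun hlt => ?_)
    (by simpa only [min_eq_left hMS] using h.min_depth_le_depth_middle)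
  have hsucc : depth A M + 1 ≤ depth A M :=
    (le_min (Order.add_one_le_of_lt hlt) (by gcongr)).trans h.min_depth_le_depth_left
  exact hsucc.not_gt ((ENat.lt_add_one_iff hlt.ne_top).2 le_rfl)

end Depth

section Syzygies

lemma min_depth_le_depth_ker (φ : M →ₗ[A] K) :
    min (depth A M) (depth A (LinearMap.range φ)) ≤ depth A (LinearMap.ker φ) := by
  have hses : IsSES (LinearMap.ker φ).subtype φ.rangeRestrict :=
    ⟨Subtype.val_injective,
      LinearMap.exact_iff.2 (by rw [LinearMap.ker_rangeRestrict, Submodule.range_subtype]),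
      φ.surjective_rangeRestrict⟩
  exact (min_le_min_left _ le_self_add).trans hses.min_depth_le_depth_left

lemma min_depth_le_depth_ker_of_free {ι : Type} [Finite ι] (φ : (ι → A) →ₗ[A] K) :
    min (depth A A) (depth A (LinearMap.range φ)) ≤ depth A (LinearMap.ker φ) :=
  (min_le_min_right _ depth_le_depth_pi).trans (min_depth_le_depth_ker φ)

lemma MinFreeRes.min_depth_le_depth_ker_aug (R : MinFreeRes A M) :
    min (depth A A) (depth A M) ≤ depth A (LinearMap.ker R.aug) := by
  rw [← depth_congr (LinearEquiv.ofTop _ (LinearMap.range_eq_top.2 R.aug_surjective))]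
  exact min_depth_le_depth_ker_of_free R.aug

lemma MinFreeRes.min_depth_le_depth_ker_d (R : MinFreeRes A M) (n : ℕ) :
    min (depth A A) (depth A M) ≤ depth A (LinearMap.ker (R.d n)) := by
  suffices hrange : min (depth A A) (depth A M) ≤ depth A (LinearMap.range (R.d n)) from
    (le_min (min_le_left _ _) hrange).trans (min_depth_le_depth_ker_of_free (R.d n))
  induction n with
  | zero =>
    rw [← R.exact_zero.linearMap_ker_eq]
    exact R.min_depth_le_depth_ker_aug
  | succ n ih =>
    rw [← (R.exact_succ n).linearMap_ker_eq]
    exact (le_min (min_le_left _ _) ih).trans (min_depth_le_depth_ker_of_free (R.d n))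

lemma IsSyzygyOf.min_depth_le_depth {n : ℕ} (hS : IsSyzygyOf A M S n) :
    min (depth A A) (depth A M) ≤ depth A S := by
  match n, hS with
  | 0, ⟨e⟩ => exact (min_le_right _ _).trans (depth_congr e).ge
  | 1, ⟨R, ⟨e⟩⟩ => exact R.min_depth_le_depth_ker_aug.trans (depth_congr e).ge
  | n + 2, ⟨R, ⟨e⟩⟩ => exact (R.min_depth_le_depth_ker_d n).trans (depth_congr e).ge

end Syzygies

section Dimension

variable [IsNoetherianRing A] [Module.Finite A M]

lemma exists_isRegular_of_le_depth [Nontrivial M] {c : ℕ} (hc : c ≤ depth A M) :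
    ∃ rs : List A, rs.length = c ∧ RingTheory.Sequence.IsRegular M rs := by
  have hlt : maximalIdeal A • (⊤ : Submodule A M) < ⊤ :=
    (Submodule.top_ne_ideal_smul_of_le_jacobson_annihilator
      (maximalIdeal_le_jacobson _)).symm.lt_top
  have hsupp : Module.support A (A ⧸ maximalIdeal A) =
      PrimeSpectrum.zeroLocus (maximalIdeal A) := by
    rw [Module.support_eq_zeroLocus, Ideal.annihilator_quotient]
  obtain ⟨rs, hlen, -, hreg⟩ :=
    ModuleCat.exists_isRegular_of_exists_subsingleton_ext (maximalIdeal A) c (ModuleCat.of A M)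
      hlt (ModuleCat.of A (ResidueField A)) hsupp fun i hi =>
        extVanish_iff_subsingleton_abelianExt.1 (le_depth_iff.1 hc i (by exact_mod_cast hi))
  exact ⟨rs, hlen, hreg⟩

lemma length_le_supportDim_of_isRegular {rs : List A}
    (hrs : RingTheory.Sequence.IsRegular M rs) : rs.length ≤ Module.supportDim A M := by
  let Q := M ⧸ Ideal.ofList rs • (⊤ : Submodule A M)
  have : Nontrivial Q := Submodule.Quotient.nontrivial_iff.2 hrs.top_ne_smul.symm
  have : Nonempty (Module.support A Q) := Module.nonempty_support_of_nontrivial.to_subtype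
  rw [← Module.supportDim_add_length_eq_supportDim_of_isRegular rs hrs]
  exact le_add_of_nonneg_left Order.krullDim_nonneg

lemma depth_le_supportDim [Nontrivial M] :
    (depth A M : WithBot ℕ∞) ≤ Module.supportDim A M := by
  obtain ⟨d, hd⟩ := WithBot.ne_bot_iff_exists.1 (Module.supportDim_ne_bot_of_nontrivial A M)
  rw [← hd, WithBot.coe_le_coe, ← ENat.forall_natCast_le_iff_le]
  intro c hc
  obtain ⟨rs, rfl, hrs⟩ := exists_isRegular_of_le_depth hc
  exact_mod_cast hd ▸ length_le_supportDim_of_isRegular hrs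

lemma depth_le_depth_self_of_cohenMacaulay [Nontrivial M]
    (hCM : (depth A A : WithBot ℕ∞) = ringKrullDim A) : depth A M ≤ depth A A :=
  WithBot.coe_le_coe.1 <|
    depth_le_supportDim.trans ((Module.supportDim_le_ringKrullDim A M).trans hCM.ge)

lemma IsSES.depth_middle_eq_of_isSyzygyOf [Nontrivial M]
    (hCM : (depth A A : WithBot ℕ∞) = ringKrullDim A) (h : IsSES f g) {n : ℕ}
    (hS : IsSyzygyOf A M S n) : depth A K = depth A M := by
  refine h.depth_middle_eq ?_
  simpa only [min_eq_right (depth_le_depth_self_of_cohenMacaulay hCM)] using hS.min_depth_le_depth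

end Dimension

section ReducibleComplexity

lemma hasFiniteProjDim_of_subsingleton [Subsingleton M] : HasFiniteProjDim A M := by
  refine ⟨0, ⟨fun _ => 0, fun _ => 0, 0, fun x => ⟨0, Subsingleton.elim _ _⟩, ?_, ?_, ?_⟩,
    fun _ _ => rfl⟩
  · exact fun x => by simp [Subsingleton.elim x 0]
  · exact fun _ x => by simp [Subsingleton.elim x 0]
  · exact fun _ _ i => i.elim0

lemma HasRedCxCat.hasFreeRedCxCat {M : ModuleCat.{u} A} (h : HasRedCxCat M) :
    HasFreeRedCxCat M := by
  induction h with
  | of_finite_projDim M hfg h => exact .of_finite_projDim M hfg h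
  | step M K S n hfg hKfg hpos hfin hsyz f g hses hcx _ _ ih =>
    exact .step M K S n hfg hKfg hpos hfin hsyz f g hses hcx ih

lemma HasFreeRedCxCat.hasRedCxCat [IsNoetherianRing A]
    (hCM : (depth A A : WithBot ℕ∞) = ringKrullDim A) {M : ModuleCat.{u} A}
    (h : HasFreeRedCxCat M) : HasRedCxCat M := by
  induction h with
  | of_finite_projDim M hfg h => exact .of_finite_projDim M hfg h
  | step M K S n hfg hKfg hpos hfin hsyz f g hses hcx _ ih =>
    rcases subsingleton_or_nontrivial M with _ | _
    · exact .of_finite_projDim M hfg hasFiniteProjDim_of_subsingleton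
    · have hdepth : depth A K = depth A M := hses.depth_middle_eq_of_isSyzygyOf hCM hsyz
      exact .step M K S n hfg hKfg hpos hfin hsyz f g hses hcx hdepth ih

end ReducibleComplexity

end ComplexityTest

/-- Over a Cohen-Macaulay local ring (i.e. `depth A = dim A`), a finitely generated
module has reducible complexity if and only if it has free reducible complexity: the
categories `C^rc_A` and `C^frc_A` coincide. -/
theorem hasRedCx_iff_hasFreeRedCx_of_cohenMacaulay
    (A : Type u) [CommRing A] [IsLocalRing A] [IsNoetherianRing A]
    (hCM : (depth A A : WithBot ℕ∞) = ringKrullDim A) :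
    ∀ (M : Type u) [AddCommGroup M] [Module A M] [Module.Finite A M],
      HasRedCx A M ↔ HasFreeRedCx A M :=
  fun _ _ _ _ => ⟨HasRedCxCat.hasFreeRedCxCat, HasFreeRedCxCat.hasRedCxCat hCM⟩
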